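/- Let V be a finite set, let Ã : V×V → ℝ be symmetric with Ã(k,k') = Ã(k',k) ≥ 0 and Ã(k,k) = 0, let λ > 0, let ‖·‖ be a norm on ℝ^d with dual norm ‖·‖_*, and for each k ∈ V let F_k : ℝ^d → ℝ be convex and differentiable. If w̃ : V → ℝ^d is a global minimizer of the objective w ↦ Σ_{k∈V} F_k(w_k) + λ Σ_{{k,k'}} Ã(k,k') ‖w_k − w_{k'}‖ (the second sum running over unordered pairs of distinct elements of V, each pair counted once), then for every node k ∈ V: ‖∇F_k(w̃_k)‖_* ≤ λ Σ_{k'∈V, k'≠k} Ã(k,k'). -/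

import Mathlib

/-!
Moving a single block of the minimizer, from `w k` to `w k + h`, changes only the terms of the
variation that involve `k`, each by at most its weight times `‖h‖`. Hence `w k` is a local minimum
of `y ↦ F k y + c * ‖y - w k‖` with `c = λ * ∑ j ≠ k, A k j`. The derivative of this function along
the ray from `w k` in the direction `-z` is nonnegative, that is, `⟪∇F k (w k), z⟫ ≤ c * ‖z‖`.
-/

open Filter Finset Function Topology

theorem sum_sum_eq_of_symm {V M : Type*} [Fintype V] [DecidableEq V] [AddCommMonoid M]
    {g : V → V → M} (hg : ∀ i j, g i j = g j i) (k : V) :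
    ∑ i, ∑ j, g i j = g k k + 2 • ∑ j ∈ univ.erase k, g k j +
      ∑ i ∈ univ.erase k, ∑ j ∈ univ.erase k, g i j := by
  have hrow (i : V) : ∑ j, g i j = g k i + ∑ j ∈ univ.erase k, g i j := by
    rw [← add_sum_erase _ _ (mem_univ k), hg i k]
  rw [← add_sum_erase _ _ (mem_univ k), hrow k, sum_congr rfl fun i _ => hrow i,
    sum_add_distrib, two_nsmul]
  simp only [add_assoc]

section Variation

variable {V E : Type*} [Fintype V] [AddCommGroup E] [Module ℝ E]

/-- The generalized total variation of a vector-valued signal `w` on a weighted graph, measured by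
a seminorm `p`. The factor `1 / 2` makes each unordered pair count once when `A` is symmetric. -/
noncomputable def totalVariation (p : Seminorm ℝ E) (A : V → V → ℝ) (w : V → E) : ℝ :=
  (1 / 2) * ∑ i, ∑ j, A i j * p (w i - w j)

/-- The objective of generalized total variation minimization: local losses `F i` plus the total
variation with regularization parameter `lam`. -/
noncomputable def gtvObjective (p : Seminorm ℝ E) (A : V → V → ℝ) (lam : ℝ) (F : V → E → ℝ)
    (w : V → E) : ℝ :=
  ∑ i, F i (w i) + lam * totalVariation p A w

variable [DecidableEq V] (p : Seminorm ℝ E) {A : V → V → ℝ}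

theorem totalVariation_eq_sum_erase_add (hA : ∀ i j, A i j = A j i) (w : V → E) (k : V) :
    totalVariation p A w = ∑ j ∈ univ.erase k, A k j * p (w k - w j) +
      (1 / 2) * ∑ i ∈ univ.erase k, ∑ j ∈ univ.erase k, A i j * p (w i - w j) := by
  have hsymm (i j : V) : A i j * p (w i - w j) = A j i * p (w j - w i) := by
    rw [hA, map_sub_rev]
  rw [totalVariation, sum_sum_eq_of_symm hsymm k, sub_self, map_zero, mul_zero, nsmul_eq_mul]
  push_cast
  ring

theorem totalVariation_update_sub (hA : ∀ i j, A i j = A j i) (w : V → E) (k : V) (y : E) :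
    totalVariation p A (update w k y) - totalVariation p A w =
      ∑ j ∈ univ.erase k, A k j * (p (y - w j) - p (w k - w j)) := by
  have hoff {j : V} (hj : j ∈ univ.erase k) : update w k y j = w j :=
    update_of_ne (ne_of_mem_erase hj) y w
  have hstar : ∑ j ∈ univ.erase k, A k j * p (update w k y k - update w k y j) =
      ∑ j ∈ univ.erase k, A k j * p (y - w j) :=
    sum_congr rfl fun j hj => by rw [update_self, hoff hj]
  have hrest : ∑ i ∈ univ.erase k, ∑ j ∈ univ.erase k,
        A i j * p (update w k y i - update w k y j) =
      ∑ i ∈ univ.erase k, ∑ j ∈ univ.erase k, A i j * p (w i - w j) :=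
    sum_congr rfl fun i hi => sum_congr rfl fun j hj => by rw [hoff hi, hoff hj]
  rw [totalVariation_eq_sum_erase_add p hA _ k, totalVariation_eq_sum_erase_add p hA w k, hstar,
    hrest, add_sub_add_right_eq_sub, ← sum_sub_distrib]
  simp only [mul_sub]

theorem totalVariation_update_sub_le (hA : ∀ i j, A i j = A j i) {k : V} (hAk : ∀ j, 0 ≤ A k j)
    (w : V → E) (y : E) :
    totalVariation p A (update w k y) - totalVariation p A w ≤
      (∑ j ∈ univ.erase k, A k j) * p (y - w k) := by
  rw [totalVariation_update_sub p hA, sum_mul]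
  gcongr with j
  · exact hAk j
  · exact sub_le_iff_le_add.2 (le_map_sub_add_map_sub p y (w k) (w j))

theorem gtvObjective_update_sub (lam : ℝ) (F : V → E → ℝ) (w : V → E) (k : V) (y : E) :
    gtvObjective p A lam F (update w k y) - gtvObjective p A lam F w =
      F k y - F k (w k) + lam * (totalVariation p A (update w k y) - totalVariation p A w) := by
  have hloss : ∑ i, F i (update w k y i) = F k y + ∑ i ∈ univ.erase k, F i (w i) := by
    rw [← add_sum_erase _ _ (mem_univ k), update_self]
    exact congrArg _ (sum_congr rfl fun i hi => by rw [update_of_ne (ne_of_mem_erase hi)])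
  rw [gtvObjective, gtvObjective, hloss, ← add_sum_erase _ (fun i => F i (w i)) (mem_univ k)]
  ring

theorem isLocalMin_block_of_isLocalMin_gtvObjective [TopologicalSpace E]
    (hA : ∀ i j, A i j = A j i) {k : V} (hAk : ∀ j, 0 ≤ A k j) {lam : ℝ} (hlam : 0 ≤ lam)
    {F : V → E → ℝ} {w : V → E} (hw : IsLocalMin (gtvObjective p A lam F) w) :
    IsLocalMin (fun y => F k y + lam * (∑ j ∈ univ.erase k, A k j) * p (y - w k)) (w k) := by
  have hupdate : Tendsto (update w k) (𝓝 (w k)) (𝓝 w) := by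
    simpa using (show Continuous (update w k) by fun_prop).tendsto (w k)
  filter_upwards [hupdate.eventually hw] with y hy
  have hvar := mul_le_mul_of_nonneg_left (totalVariation_update_sub_le p hA hAk w y) hlam
  have hobj := gtvObjective_update_sub p (A := A) lam F w k y
  rw [sub_self, map_zero, mul_zero, add_zero]
  linarith

end Variation

theorem nonneg_add_of_isLocalMin_add_seminorm {E : Type*} [AddCommGroup E] [Module ℝ E]
    [TopologicalSpace E] [ContinuousAdd E] [ContinuousSMul ℝ E] {p : Seminorm ℝ E}
    {f : E → ℝ} {c f' : ℝ} {x v : E}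
    (hmin : IsLocalMin (fun y => f y + c * p (y - x)) x) (hf : HasLineDerivAt ℝ f f' x v) :
    0 ≤ f' + c * p v := by
  have hray : Tendsto (fun t : ℝ => x + t • v) (𝓝 0) (𝓝 x) := by
    simpa using (show Continuous fun t : ℝ => x + t • v by fun_prop).tendsto 0
  have hmin_ray : IsLocalMinOn (fun t : ℝ => f (x + t • v) + t * (c * p v)) (Set.Ici 0) 0 := by
    filter_upwards [nhdsWithin_le_nhds (hray.eventually hmin), self_mem_nhdsWithin]
      with t ht ht0
    rw [add_sub_cancel_left, map_smul_eq_mul, Real.norm_of_nonneg ht0, sub_self, map_zero] at ht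
    rw [zero_smul, add_zero]
    linarith
  have hderiv : HasDerivAt (fun t : ℝ => f (x + t • v) + t * (c * p v)) (f' + c * p v) 0 := by
    simpa only [one_mul] using hf.fun_add ((hasDerivAt_id' (0 : ℝ)).mul_const (c * p v))
  have hcone : (1 : ℝ) ∈ posTangentConeAt (Set.Ici (0 : ℝ)) 0 :=
    mem_posTangentConeAt_of_segment_subset <| by
      rw [zero_add, segment_eq_Icc zero_le_one]
      exact Set.Icc_subset_Ici_self
  simpa using hmin_ray.hasFDerivWithinAt_nonneg hderiv.hasFDerivAt.hasFDerivWithinAt hcone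

/-- The dual norm of `x` with respect to a seminorm `p`. As a real supremum it is the junk value `0`
when `inner ℝ x` is unbounded on the unit ball of `p`. -/
noncomputable def dualNorm {E : Type*} [SeminormedAddCommGroup E] [InnerProductSpace ℝ E]
    (p : Seminorm ℝ E) (x : E) : ℝ :=
  sSup {t : ℝ | ∃ z, p z ≤ 1 ∧ t = inner ℝ x z}

theorem dualNorm_le {E : Type*} [SeminormedAddCommGroup E] [InnerProductSpace ℝ E]
    {p : Seminorm ℝ E} {x : E} {c : ℝ} (hc : 0 ≤ c) (hx : ∀ z, inner ℝ x z ≤ c * p z) :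
    dualNorm p x ≤ c := by
  refine Real.sSup_le ?_ hc
  rintro _ ⟨z, hz, rfl⟩
  exact (hx z).trans (mul_le_of_le_one_right hc hz)

theorem gtv_minimizer_gradient_bound_general {V E : Type*} [Fintype V] [DecidableEq V]
    [NormedAddCommGroup E] [NormedSpace ℝ E] (p : Seminorm ℝ E) {A : V → V → ℝ}
    (hA : ∀ i j, A i j = A j i) {k : V} (hAk : ∀ j, 0 ≤ A k j) {lam : ℝ} (hlam : 0 ≤ lam)
    {F : V → E → ℝ} {w : V → E} (hw : IsLocalMin (gtvObjective p A lam F) w)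
    {F' : E →L[ℝ] ℝ} (hF : HasFDerivAt (F k) F' (w k)) (z : E) :
    F' z ≤ lam * (∑ j ∈ univ.erase k, A k j) * p z := by
  have hdir := nonneg_add_of_isLocalMin_add_seminorm
    (isLocalMin_block_of_isLocalMin_gtvObjective p hA hAk hlam hw) (hF.hasLineDerivAt (-z))
  rw [map_neg, map_neg_eq_map] at hdir
  linarith

/-- If `w̃` is a global minimizer of the GTV objective
`w ↦ Σ_k F_k(w_k) + λ Σ_{unordered pairs {k,k'}} Ã(k,k') ‖w_k − w_{k'}‖` (the sum over
unordered pairs, each counted once, is encoded as half the symmetric double sum),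
then for every node `k` the dual norm of the gradient satisfies
`‖∇F_k(w̃_k)‖_* ≤ λ Σ_{k'≠k} Ã(k,k')`. -/
theorem gtv_minimizer_gradient_bound
    {d : ℕ} {V : Type*} [Fintype V] [DecidableEq V]
    (At : V → V → ℝ)
    (hAsym : ∀ k k', At k k' = At k' k)
    (hAnonneg : ∀ k k', 0 ≤ At k k')
    (hAdiag : ∀ k, At k k = 0)
    (lam : ℝ) (hlam : 0 < lam)
    (nrm : EuclideanSpace ℝ (Fin d) → ℝ)
    (hnrm_zero : ∀ x, nrm x = 0 ↔ x = 0)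
    (hnrm_smul : ∀ (a : ℝ) (x : EuclideanSpace ℝ (Fin d)), nrm (a • x) = |a| * nrm x)
    (hnrm_add : ∀ x y, nrm (x + y) ≤ nrm x + nrm y)
    (dnrm : EuclideanSpace ℝ (Fin d) → ℝ)
    (hdnrm : ∀ x, dnrm x = sSup {t : ℝ | ∃ z, nrm z ≤ 1 ∧ t = (inner ℝ x z : ℝ)})
    (F : V → EuclideanSpace ℝ (Fin d) → ℝ)
    (hFconv : ∀ k, ConvexOn ℝ Set.univ (F k))
    (hFdiff : ∀ k, Differentiable ℝ (F k))
    (wt : V → EuclideanSpace ℝ (Fin d))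
    (hmin : ∀ w : V → EuclideanSpace ℝ (Fin d),
      (∑ k, F k (wt k)) + lam * ((1 / 2) * ∑ k, ∑ k', At k k' * nrm (wt k - wt k'))
        ≤ (∑ k, F k (w k)) + lam * ((1 / 2) * ∑ k, ∑ k', At k k' * nrm (w k - w k'))) :
    ∀ k, dnrm (gradient (F k) (wt k)) ≤ lam * ∑ k' ∈ Finset.univ.erase k, At k k' := by
  intro k
  let p : Seminorm ℝ (EuclideanSpace ℝ (Fin d)) := Seminorm.of nrm hnrm_add hnrm_smul
  have hlocal : IsLocalMin (gtvObjective p At lam F) wt := Eventually.of_forall hmin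
  have hgrad : HasFDerivAt (F k) _ (wt k) := (hFdiff k (wt k)).hasGradientAt.hasFDerivAt
  have hbound : 0 ≤ lam * ∑ k' ∈ univ.erase k, At k k' :=
    mul_nonneg hlam.le (sum_nonneg fun k' _ => hAnonneg k k')
  rw [hdnrm]
  exact dualNorm_le (p := p) hbound
    (gtv_minimizer_gradient_bound_general p hAsym (hAnonneg k) hlam.le hlocal hgrad)
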